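/- If H₁ and H₂ are cospectral graphs (on the same number n of vertices, with equal characteristic polynomials) that additionally have equal coronals χ_{H₁}(λ) = χ_{H₂}(λ), then for any graph G the coronas G∘H₁ and G∘H₂ are cospectral: f_{G∘H₁}(λ) = f_{G∘H₂}(λ). -/

import Mathlib

open Matrix Polynomial

/-- The characteristic matrix `λ I - B` of `B`, over the field `ℂ(λ)` of rational functions. -/
noncomputable def charMatRatFunc {V : Type*} [Fintype V] [DecidableEq V]
    (B : Matrix V V ℂ) : Matrix V V (RatFunc ℂ) :=
  Matrix.scalar V (RatFunc.X : RatFunc ℂ) - B.map (algebraMap ℂ (RatFunc ℂ))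

/-- The coronal of a matrix `B`: the sum of the entries of `(λ I - B)⁻¹` over `ℂ(λ)`. -/
noncomputable def coronal {V : Type*} [Fintype V] [DecidableEq V]
    (B : Matrix V V ℂ) : RatFunc ℂ :=
  ∑ i, ∑ j, (charMatRatFunc B)⁻¹ i j

/-- The adjacency matrix of the corona `G ∘ H`. -/
def coronaMatrix {α β : Type*} (A : Matrix α α ℂ) (B : Matrix β β ℂ)
    [DecidableEq α] :
    Matrix (α ⊕ β × α) (α ⊕ β × α) ℂ :=
  Matrix.fromBlocks A
    (Matrix.of fun i p => if i = p.2 then 1 else 0)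
    (Matrix.of fun p j => if p.2 = j then 1 else 0)
    (Matrix.of fun p q => if p.2 = q.2 then B p.1 q.1 else 0)

/-!
A Schur complement computation over `ℂ(λ)`. The lower right block of `λI - A∘B` is `(λI - B) ⊗ I`,
and its Schur complement is `λI - A - (1ᵀ ⊗ I) ((λI - B)⁻¹ ⊗ I) (1 ⊗ I) = λI - A - χ_B I`. Hence
`f_{A∘B} = f_B ^ m * det ((λ - χ_B) I - A)`, which depends on `B` only through `f_B` and `χ_B`.
-/

open scoped Kronecker

/-- The matrix `1_n ⊗ I_m` of the corona, joining the vertex `j` of the base graph to every vertex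
`(b, j)` of the `j`-th copy. It is indexed by `(β × α) × α`, whereas a Kronecker product with a
column would have columns indexed by `Unit × α`. -/
def copyIncidence (α β R : Type*) [DecidableEq α] [Zero R] [One R] : Matrix (β × α) α R :=
  Matrix.of fun p j => if p.2 = j then 1 else 0

section CopyIncidence

variable {α β R : Type*} [DecidableEq α]

theorem copyIncidence_map {S : Type*} [NonAssocSemiring R] [NonAssocSemiring S] (f : R →+* S) :
    (copyIncidence α β R).map f = copyIncidence α β S := by
  ext p j
  simp [copyIncidence, apply_ite f]

theorem copyIncidence_transpose_mul_kronecker_mul {γ δ : Type*} [DecidableEq δ]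
    [NonAssocSemiring R] [Fintype α] [Fintype δ] [Fintype β] [Fintype γ]
    (N : Matrix β γ R) (M : Matrix α δ R) :
    (copyIncidence α β R)ᵀ * (N ⊗ₖ M) * copyIncidence δ γ R = (∑ b, ∑ c, N b c) • M := by
  ext i j
  simp only [copyIncidence, mul_apply, Fintype.sum_prod_type, transpose_apply, of_apply,
    kronecker_apply, ite_mul, mul_ite, one_mul, zero_mul, mul_one, mul_zero, Finset.sum_ite_eq',
    Finset.mem_univ, if_true, Matrix.smul_apply, smul_eq_mul, Finset.sum_mul]
  exact Finset.sum_comm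

theorem det_fromBlocks_copyIncidence [CommRing R] [Fintype α] [Fintype β] [DecidableEq β]
    (M : Matrix α α R) {N : Matrix β β R} (hN : IsUnit N.det) :
    (fromBlocks M (-(copyIncidence α β R)ᵀ) (-copyIncidence α β R) (N ⊗ₖ 1)).det =
      N.det ^ Fintype.card α * (M - scalar α (∑ b, ∑ c, N⁻¹ b c)).det := by
  have det_copies : (N ⊗ₖ (1 : Matrix α α R)).det = N.det ^ Fintype.card α := by
    rw [det_kronecker, det_one, one_pow, mul_one]
  have schur_term : -(copyIncidence α β R)ᵀ * (N ⊗ₖ (1 : Matrix α α R))⁻¹ * -copyIncidence α β R =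
      scalar α (∑ b, ∑ c, N⁻¹ b c) := by
    rw [inv_kronecker, inv_one, Matrix.neg_mul, Matrix.neg_mul, Matrix.mul_neg, neg_neg,
      copyIncidence_transpose_mul_kronecker_mul, smul_one_eq_diagonal, scalar_apply]
  let _ := invertibleOfIsUnitDet (N ⊗ₖ (1 : Matrix α α R)) (det_copies ▸ hN.pow _)
  rw [det_fromBlocks₂₂, invOf_eq_nonsing_inv, schur_term, det_copies]

end CopyIncidence

theorem charmatrix_kronecker_one {α β R : Type*} [CommRing R] [Fintype α] [DecidableEq α]
    [Fintype β] [DecidableEq β] (B : Matrix β β R) :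
    charmatrix (B ⊗ₖ (1 : Matrix α α R)) = charmatrix B ⊗ₖ (1 : Matrix α α R[X]) := by
  ext ⟨b, i⟩ ⟨c, j⟩ : 1
  by_cases h : i = j <;> simp [charmatrix_apply, diagonal_apply, one_apply, h]

theorem coronaMatrix_eq_fromBlocks {α β : Type*} [DecidableEq α] (A : Matrix α α ℂ)
    (B : Matrix β β ℂ) :
    coronaMatrix A B =
      fromBlocks A (copyIncidence α β ℂ)ᵀ (copyIncidence α β ℂ) (B ⊗ₖ 1) := by
  ext (i | ⟨b, i⟩) (j | ⟨c, j⟩) <;>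
    simp [coronaMatrix, copyIncidence, one_apply, eq_comm]

section RatFunc

variable {α β : Type*} [Fintype α] [DecidableEq α] [Fintype β] [DecidableEq β]

theorem charMatRatFunc_eq_map_charmatrix (B : Matrix β β ℂ) :
    charMatRatFunc B = (charmatrix B).map (algebraMap ℂ[X] (RatFunc ℂ)) := by
  ext i j : 1
  simp [charMatRatFunc, charmatrix_apply, diagonal_apply, apply_ite, RatFunc.algebraMap_C,
    RatFunc.algebraMap_eq_C]

theorem det_charMatRatFunc (B : Matrix β β ℂ) :
    (charMatRatFunc B).det = algebraMap ℂ[X] (RatFunc ℂ) B.charpoly := by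
  rw [charMatRatFunc_eq_map_charmatrix, charpoly, RingHom.map_det, RingHom.mapMatrix_apply]

theorem isUnit_det_charMatRatFunc (B : Matrix β β ℂ) : IsUnit (charMatRatFunc B).det := by
  rw [det_charMatRatFunc, isUnit_iff_ne_zero]
  exact RatFunc.algebraMap_ne_zero B.charpoly_monic.ne_zero

theorem charMatRatFunc_kronecker_one (B : Matrix β β ℂ) :
    charMatRatFunc (B ⊗ₖ (1 : Matrix α α ℂ)) =
      charMatRatFunc B ⊗ₖ (1 : Matrix α α (RatFunc ℂ)) := by
  ext ⟨b, i⟩ ⟨c, j⟩ : 1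
  by_cases h : i = j <;>
    simp [charMatRatFunc_eq_map_charmatrix, charmatrix_kronecker_one, h]

theorem charMatRatFunc_coronaMatrix (A : Matrix α α ℂ) (B : Matrix β β ℂ) :
    charMatRatFunc (coronaMatrix A B) =
      fromBlocks (charMatRatFunc A) (-(copyIncidence α β (RatFunc ℂ))ᵀ)
        (-copyIncidence α β (RatFunc ℂ)) (charMatRatFunc B ⊗ₖ 1) := by
  rw [← charMatRatFunc_kronecker_one]
  simp only [charMatRatFunc_eq_map_charmatrix, coronaMatrix_eq_fromBlocks, charmatrix_fromBlocks,
    fromBlocks_map, Matrix.map_neg _ (map_neg (algebraMap ℂ[X] (RatFunc ℂ))), transpose_map,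
    copyIncidence_map]

theorem algebraMap_charpoly_coronaMatrix (A : Matrix α α ℂ) (B : Matrix β β ℂ) :
    algebraMap ℂ[X] (RatFunc ℂ) (coronaMatrix A B).charpoly =
      algebraMap ℂ[X] (RatFunc ℂ) B.charpoly ^ Fintype.card α *
        (charMatRatFunc A - scalar α (coronal B)).det := by
  rw [← det_charMatRatFunc, charMatRatFunc_coronaMatrix,
    det_fromBlocks_copyIncidence _ (isUnit_det_charMatRatFunc B), det_charMatRatFunc, coronal]

end RatFunc

theorem corona_cospectral_right_general {α β₁ β₂ : Type*} [Fintype α] [DecidableEq α]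
    [Fintype β₁] [DecidableEq β₁] [Fintype β₂] [DecidableEq β₂]
    (A : Matrix α α ℂ) {B₁ : Matrix β₁ β₁ ℂ} {B₂ : Matrix β₂ β₂ ℂ}
    (hcospec : B₁.charpoly = B₂.charpoly) (hcoronal : coronal B₁ = coronal B₂) :
    (coronaMatrix A B₁).charpoly = (coronaMatrix A B₂).charpoly := by
  apply RatFunc.algebraMap_injective ℂ
  rw [algebraMap_charpoly_coronaMatrix, algebraMap_charpoly_coronaMatrix, hcospec, hcoronal]

/-- If `H₁` and `H₂` are cospectral and have the same coronal, then `G ∘ H₁` and `G ∘ H₂`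
are cospectral, for any `G`. -/
theorem corona_cospectral_right {m n : ℕ} (G : SimpleGraph (Fin m))
    (H₁ H₂ : SimpleGraph (Fin n)) [DecidableRel G.Adj] [DecidableRel H₁.Adj]
    [DecidableRel H₂.Adj]
    (hcospec : (H₁.adjMatrix ℂ).charpoly = (H₂.adjMatrix ℂ).charpoly)
    (hcoronal : coronal (H₁.adjMatrix ℂ) = coronal (H₂.adjMatrix ℂ)) :
    (coronaMatrix (G.adjMatrix ℂ) (H₁.adjMatrix ℂ)).charpoly =
      (coronaMatrix (G.adjMatrix ℂ) (H₂.adjMatrix ℂ)).charpoly :=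
  corona_cospectral_right_general (G.adjMatrix ℂ) hcospec hcoronal
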